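/- arXiv:1409.6466 — 2 statements merged into one kernel-verified Lean document; each statement's English description precedes it below -/
import Mathlib

section
/- Let S be a finite nonempty set, P : S × S → [0,1], a, b : S → [0,1], and n ∈ ℕ. For every s ∈ S, sup over all runs σ from s of min( val_P(σ), U_n(σ) ) equals max_{0 ≤ j ≤ n} of [ sup over all finite sequences t₀ = s, t₁, …, t_j in S of min( min_{0 ≤ k < j} min( a(t_k), P(t_k, t_{k+1}) ), b(t_j), r_P(t_j) ) ], where U_n(σ) := max_{0 ≤ j ≤ n} min( min_{0 ≤ k < j} a(σ k), min_{1 ≤ k ≤ j} P(σ(k-1), σ k), b(σ j) ). -/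
/-!
Cutting a run at position `j` is a bijection onto pairs of a fragment `t₀, …, t_j` and a run from
`t_j`, under which the value of the run becomes the infimum of the two values. Since `⊓`
distributes over suprema, the supremum over the second component can be taken inside, where it
gives `r_P(t_j)`. The transitions counted by `U_n` already occur in the fragment, so they are
absorbed by idempotence.
-/

/-- `[0,1]` as a complete lattice. -/
instance : Fact ((0:ℝ) ≤ 1) := ⟨zero_le_one⟩

/-- The value of a run `σ`: `inf_{i ≥ 0} P(σ i, σ (i+1))`. -/
noncomputable def valP {S : Type*} (P : S → S → unitInterval) (σ : ℕ → S) : unitInterval :=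
  ⨅ i : ℕ, P (σ i) (σ (i + 1))

/-- `r_P(s)`: the supremum of the values of all runs starting at `s`. -/
noncomputable def rP {S : Type*} (P : S → S → unitInterval) (s : S) : unitInterval :=
  ⨆ σ : {σ : ℕ → S // σ 0 = s}, valP P σ.1

/-- `U_n(σ)`: the semantics of the bounded-until formula `Φ ⊔^{≤n} Ψ` on a sequence `σ`,
where `a = ||Φ||` and `b = ||Ψ||`:
`max_{0 ≤ j ≤ n} min( min_{0≤k<j} a(σ k), min_{1≤k≤j} P(σ(k-1), σ k), b(σ j) )`. -/
noncomputable def boundedUntilSem {S : Type*} (P : S → S → unitInterval)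
    (a b : S → unitInterval) (n : ℕ) (σ : ℕ → S) : unitInterval :=
  ⨆ j : Fin (n + 1),
    min (⨅ k : Fin j.val, a (σ k.val))
      (min (⨅ k : Fin j.val, P (σ k.val) (σ (k.val + 1))) (b (σ j.val)))

section CompleteLattice

variable {S L : Type*} [CompleteLattice L] (P : S → S → L)

/-- The value of a run for `L`-valued transitions; for `L = [0,1]` this is `valP`. -/
def runValue (σ : ℕ → S) : L :=
  ⨅ i : ℕ, P (σ i) (σ (i + 1))

/-- The value of a finite fragment `t₀, …, t_j`: the infimum of its `j` transitions, which is `⊤`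
for `j = 0`. -/
def fragmentValue {j : ℕ} (t : Fin (j + 1) → S) : L :=
  ⨅ k : Fin j, P (t k.castSucc) (t k.succ)

/-- The supremum of the values of the runs from a state, for `L`-valued transitions; for
`L = [0,1]` this is `rP`. -/
def continuationValue (s : S) : L :=
  ⨆ σ : {σ : ℕ → S // σ 0 = s}, runValue P σ.1

/-- The bounded-until semantics `U_n` for `L`-valued transitions and state formulas; for
`L = [0,1]` this is `boundedUntilSem`. -/
def boundedUntil (a b : S → L) (n : ℕ) (σ : ℕ → S) : L :=
  ⨆ j : Fin (n + 1),
    (⨅ k : Fin j.val, a (σ k)) ⊓ ((⨅ k : Fin j.val, P (σ k) (σ (k + 1))) ⊓ b (σ j))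

lemma runValue_eq_fragmentValue_inf_runValue (j : ℕ) (σ : ℕ → S) :
    runValue P σ =
      fragmentValue P (fun k : Fin (j + 1) ↦ σ k) ⊓ runValue P (fun i ↦ σ (j + i)) := by
  unfold runValue
  rw [← (finSumNatEquiv j).iInf_comp, iInf_sum]
  rfl

lemma runValue_le_continuationValue (σ : ℕ → S) : runValue P σ ≤ continuationValue P (σ 0) :=
  le_iSup (fun τ : {τ : ℕ → S // τ 0 = σ 0} ↦ runValue P τ.1) ⟨σ, rfl⟩

end CompleteLattice

lemma exists_run_extending_fragment {S : Type*} {j : ℕ} (t : Fin (j + 1) → S) (ρ : ℕ → S)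
    (hρ : ρ 0 = t (Fin.last j)) :
    ∃ σ : ℕ → S, (fun k : Fin (j + 1) ↦ σ k) = t ∧ (fun i ↦ σ (j + i)) = ρ := by
  refine ⟨fun i ↦ if h : i < j + 1 then t ⟨i, h⟩ else ρ (i - j), ?_, ?_⟩
  · ext k
    exact dif_pos k.isLt
  · ext i
    cases i with
    | zero => simp [hρ, Fin.last]
    | succ i => simp

section Frame

variable {S L : Type*} [Order.Frame L] (P : S → S → L)

lemma iSup_prefix_inf_runValue_eq_iSup_fragment {j : ℕ} (f : (Fin (j + 1) → S) → L) (s : S) :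
    (⨆ σ : {σ : ℕ → S // σ 0 = s}, f (fun k ↦ σ.1 k) ⊓ runValue P σ.1) =
      ⨆ t : {t : Fin (j + 1) → S // t 0 = s},
        f t.1 ⊓ (fragmentValue P t.1 ⊓ continuationValue P (t.1 (Fin.last j))) := by
  apply le_antisymm
  · refine iSup_le fun σ ↦ le_iSup_of_le ⟨fun k ↦ σ.1 k, σ.2⟩ ?_
    rw [runValue_eq_fragmentValue_inf_runValue P j]
    gcongr
    exact runValue_le_continuationValue P fun i ↦ σ.1 (j + i)
  · refine iSup_le fun ⟨t, ht⟩ ↦ ?_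
    simp only [continuationValue, inf_iSup_eq]
    refine iSup_le fun ⟨ρ, hρ⟩ ↦ ?_
    obtain ⟨σ, rfl, rfl⟩ := exists_run_extending_fragment t ρ hρ
    rw [← runValue_eq_fragmentValue_inf_runValue P j]
    exact le_iSup (fun τ : {τ : ℕ → S // τ 0 = s} ↦ f (fun k ↦ τ.1 k) ⊓ runValue P τ.1) ⟨σ, ht⟩

theorem bounded_until_semantics_general (a b : S → L) (n : ℕ) (s : S) :
    (⨆ σ : {σ : ℕ → S // σ 0 = s}, runValue P σ.1 ⊓ boundedUntil P a b n σ.1) =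
      ⨆ j : Fin (n + 1), ⨆ t : {t : Fin (j.val + 1) → S // t 0 = s},
        (⨅ k : Fin j.val, a (t.1 k.castSucc) ⊓ P (t.1 k.castSucc) (t.1 k.succ)) ⊓
          (b (t.1 (Fin.last j.val)) ⊓ continuationValue P (t.1 (Fin.last j.val))) := by
  simp only [boundedUntil, inf_iSup_eq, iInf_inf_eq]
  rw [iSup_comm]
  refine iSup_congr fun j ↦ ?_
  let f (t : Fin (j.val + 1) → S) : L :=
    (⨅ k : Fin j.val, a (t k.castSucc)) ⊓ (fragmentValue P t ⊓ b (t (Fin.last j.val)))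
  calc
    _ = ⨆ σ : {σ : ℕ → S // σ 0 = s}, f (fun k ↦ σ.1 k) ⊓ runValue P σ.1 :=
      iSup_congr fun _ ↦ inf_comm _ _
    _ = ⨆ t : {t : Fin (j.val + 1) → S // t 0 = s},
          f t.1 ⊓ (fragmentValue P t.1 ⊓ continuationValue P (t.1 (Fin.last j.val))) :=
      iSup_prefix_inf_runValue_eq_iSup_fragment P f s
    _ = _ := iSup_congr fun _ ↦ by
      simp only [f, fragmentValue]
      ac_rfl

end Frame

/-- `Po(s ⊨ Φ ⊔^{≤n} Ψ)`, the sup over runs from `s` of `min(val_P(σ), U_n(σ))`, equals the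
max over `0 ≤ j ≤ n` of the sup over finite fragments `t₀ = s, …, t_j` of
`min( min_{0≤k<j} min(a(t_k), P(t_k, t_{k+1})), b(t_j), r_P(t_j) )`. -/
theorem bounded_until_semantics {S : Type*} [Fintype S] [Nonempty S]
    (P : S → S → unitInterval) (a b : S → unitInterval) (n : ℕ) (s : S) :
    (⨆ σ : {σ : ℕ → S // σ 0 = s}, min (valP P σ.1) (boundedUntilSem P a b n σ.1))
      = ⨆ j : Fin (n + 1), ⨆ t : {t : Fin (j.val + 1) → S // t 0 = s},
          min (⨅ k : Fin j.val, min (a (t.1 k.castSucc)) (P (t.1 k.castSucc) (t.1 k.succ)))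
            (min (b (t.1 (Fin.last j.val))) (rP P (t.1 (Fin.last j.val)))) :=
  bounded_until_semantics_general P a b n s
end

section
/- Let S be a finite nonempty set, P : S × S → [0,1], a : S → [0,1], and u, v ∈ [0,1]. Define PoG(s) := sup over all runs σ from s of min( val_P(σ), inf_{i ≥ 0} a(σ i) ). Then: (i) PoG(s) ≥ u if and only if there exists a run σ from s with val_P(σ) ≥ u and a(σ i) ≥ u for all i ≥ 0; and (ii) PoG(s) ≤ v if and only if every run σ from s satisfying a(σ i) > v for all i ≥ 0 has val_P(σ) ≤ v. -/
/-- `PoG(s) = Po(s ⊨ □Φ′)`: the sup over runs `σ` from `s` of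
`min(val_P(σ), inf_{i≥0} a(σ i))`. -/
noncomputable def PoGlobally {S : Type*} (P : S → S → unitInterval)
    (a : S → unitInterval) (s : S) : unitInterval :=
  ⨆ σ : {σ : ℕ → S // σ 0 = s}, min (valP P σ.1) (⨅ i : ℕ, a (σ.1 i))

section FiniteRange

open Set Function

theorem lt_ciInf_iff_of_finite_range {α : Type*} {ι : Sort*} [ConditionallyCompleteLinearOrder α]
    [Nonempty ι] {f : ι → α} (hf : (range f).Finite) {b : α} :
    b < ⨅ i, f i ↔ ∀ i, b < f i :=
  (hf.lt_csInf_iff (range_nonempty f)).trans forall_mem_range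

variable {S : Type*} {P : S → S → unitInterval} {a : S → unitInterval}

theorem valP_mem_range_uncurry (hP : (range (uncurry P)).Finite) (σ : ℕ → S) :
    valP P σ ∈ range (uncurry P) := by
  have hsub : range (fun i ↦ P (σ i) (σ (i + 1))) ⊆ range (uncurry P) :=
    range_subset_iff.2 fun i ↦ mem_range_self (σ i, σ (i + 1))
  exact hsub ((range_nonempty _).csInf_mem (hP.subset hsub))

theorem le_valP_iff {u : unitInterval} {σ : ℕ → S} :
    u ≤ valP P σ ↔ ∀ i, u ≤ P (σ i) (σ (i + 1)) :=
  le_iInf_iff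

theorem valP_le_rP (P : S → S → unitInterval) (σ : ℕ → S) : valP P σ ≤ rP P (σ 0) :=
  le_iSup (fun τ : {τ : ℕ → S // τ 0 = σ 0} ↦ valP P τ.1) ⟨σ, rfl⟩

theorem exists_valP_eq_rP (hP : (range (uncurry P)).Finite) (s : S) :
    ∃ σ : ℕ → S, σ 0 = s ∧ valP P σ = rP P s := by
  have : Nonempty {σ : ℕ → S // σ 0 = s} := ⟨⟨fun _ ↦ s, rfl⟩⟩
  have hfin : (range fun σ : {σ : ℕ → S // σ 0 = s} ↦ valP P σ.1).Finite :=
    hP.subset (range_subset_iff.2 fun σ ↦ valP_mem_range_uncurry hP σ.1)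
  obtain ⟨σ, hσ⟩ := (range_nonempty _).csSup_mem hfin
  exact ⟨σ.1, σ.2, hσ⟩

theorem le_rP_iff (hP : (range (uncurry P)).Finite) {u : unitInterval} {s : S} :
    u ≤ rP P s ↔ ∃ σ : ℕ → S, σ 0 = s ∧ u ≤ valP P σ := by
  constructor
  · intro hu
    obtain ⟨σ, hσ, hval⟩ := exists_valP_eq_rP hP s
    exact ⟨σ, hσ, hu.trans_eq hval.symm⟩
  · rintro ⟨σ, rfl, hu⟩
    exact hu.trans (valP_le_rP P σ)

theorem PoGlobally_eq_rP (P : S → S → unitInterval) (a : S → unitInterval) (s : S) :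
    PoGlobally P a s = rP (fun x y ↦ min (P x y) (a x)) s :=
  iSup_congr fun _ ↦ iInf_inf_eq.symm

theorem le_PoGlobally_iff (hP : (range (uncurry P)).Finite) (ha : (range a).Finite)
    {u : unitInterval} {s : S} :
    u ≤ PoGlobally P a s ↔
      ∃ σ : ℕ → S, σ 0 = s ∧ u ≤ valP P σ ∧ ∀ i, u ≤ a (σ i) := by
  have hmin : (range (uncurry fun x y ↦ min (P x y) (a x))).Finite :=
    (hP.image2 min ha).subset <| range_subset_iff.2 fun p ↦
      mem_image2_of_mem (mem_range_self p) (mem_range_self p.1)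
  simp only [PoGlobally_eq_rP, le_rP_iff hmin, le_valP_iff, le_min_iff, forall_and]

theorem PoGlobally_le_iff (ha : (range a).Finite) {v : unitInterval} {s : S} :
    PoGlobally P a s ≤ v ↔
      ∀ σ : ℕ → S, σ 0 = s → (∀ i, v < a (σ i)) → valP P σ ≤ v := by
  have hlt (σ : ℕ → S) : v < ⨅ i, a (σ i) ↔ ∀ i, v < a (σ i) :=
    lt_ciInf_iff_of_finite_range (ha.subset (range_comp_subset_range σ a))
  simp only [PoGlobally, iSup_le_iff, Subtype.forall, min_le_iff, or_iff_not_imp_right, not_le,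
    hlt]

theorem always_threshold_general (hP : (range (uncurry P)).Finite) (ha : (range a).Finite)
    (u v : unitInterval) (s : S) :
    ((u ≤ PoGlobally P a s) ↔
      ∃ σ : ℕ → S, σ 0 = s ∧ u ≤ valP P σ ∧ ∀ i : ℕ, u ≤ a (σ i)) ∧
    ((PoGlobally P a s ≤ v) ↔
      ∀ σ : ℕ → S, σ 0 = s → (∀ i : ℕ, v < a (σ i)) → valP P σ ≤ v) :=
  ⟨le_PoGlobally_iff hP ha, PoGlobally_le_iff ha⟩

end FiniteRange

/-- Thresholding the always possibility (Case 6 of the PoCTL/GPoCTL comparison):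
(i) `PoG(s) ≥ u` iff some run `σ` from `s` has `val_P(σ) ≥ u` and `a(σ i) ≥ u` for all `i`;
(ii) `PoG(s) ≤ v` iff every run `σ` from `s` with `a(σ i) > v` for all `i` has
`val_P(σ) ≤ v`. -/
theorem always_threshold {S : Type*} [Fintype S] [Nonempty S]
    (P : S → S → unitInterval) (a : S → unitInterval) (u v : unitInterval) (s : S) :
    ((u ≤ PoGlobally P a s) ↔
      ∃ σ : ℕ → S, σ 0 = s ∧ u ≤ valP P σ ∧ ∀ i : ℕ, u ≤ a (σ i)) ∧
    ((PoGlobally P a s ≤ v) ↔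
      ∀ σ : ℕ → S, σ 0 = s → (∀ i : ℕ, v < a (σ i)) → valP P σ ≤ v) :=
  always_threshold_general (Set.finite_range _) (Set.finite_range _) u v s
end
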